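/- arXiv:2108.08267 — 3 statements merged into one kernel-verified Lean document; each statement's English description precedes it below -/
import Mathlib

section
/- Let ξ be a real random variable whose distribution has right-unbounded support and finite mean E ξ = −a < 0, let g satisfy conditions (C1)–(C3), and assume E exp(g(ξ)) < ∞. Then for any δ ∈ (0, a) there exists a random variable ξ̃ such that ξ ≤_st ξ̃, the distribution of ξ̃ is strong subexponential, and E ξ̃ < −a + δ < 0. -/
/-!
Let `P` be the law of `ξ`, `F` its distribution function and `C = E exp (g ξ)`. Markov's inequality
gives `P(ξ > x) ≤ C exp (-g x)`. For a large cutoff `R` put `m x = C exp (-g (max x R))` and take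
for `ξ̃` the distribution with tail `G x = max (P(ξ > x)) (m x)`. It dominates the tail of `ξ`, and
on `[R, ∞)` it is exactly `C exp (-g x)`, because there the maximum is attained by `m`.

* Strong subexponentiality (`isStrongSubexp_of_tail`): dominated convergence on half of the
  convolution integral; `g' → 0` gives the pointwise limit (`tendsto_sub_shift`), and the bound
  `g x - g (x - y) ≤ γ g y + A` gives the dominating function.
* Mean (`mean_le_of_tail_le`): the tail grows by at most `m`, and only to the right of a fixed
  `-T` with `F (-T) < 1 / 2`, since further left `F ≤ 1 - m`. So the mean grows by at most
  `C exp (-g R) (R + T) + C ∫_R^∞ exp (-g)`, which is small for large `R` because `exp (-g)` is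
  decreasing and integrable (`exists_cutoff`).
-/

open MeasureTheory ProbabilityTheory Filter Set

/-- A tail function `Fbar` is strong subexponential (`F ∈ 𝒮*`) if it is everywhere
positive, has finite mean `m = ∫₀^∞ F̄(y) dy` on the positive half-line, and
`∫₀ˣ F̄(x-y) F̄(y) dy ∼ 2 m F̄(x)` as `x → ∞`. -/
def IsStrongSubexp (Fbar : ℝ → ℝ) : Prop :=
  (∀ x, 0 < Fbar x) ∧
  MeasureTheory.IntegrableOn Fbar (Set.Ioi 0) ∧
  Filter.Tendsto
    (fun x => (∫ y in (0:ℝ)..x, Fbar (x - y) * Fbar y) /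
      (2 * (∫ y in Set.Ioi (0:ℝ), Fbar y) * Fbar x))
    Filter.atTop (nhds 1)

/-- Layer-cake comparison of means: if the right tail of `ν` exceeds that of `P` by at most `M` on
the positive half-line, and the distribution function of `ν` at `-t` is below that of `P` by
between `0` and `N t`, then the mean grows by at most `∫ M + ∫ N`. Integrability of `id` under `ν`
is part of the conclusion. -/
lemma mean_le_of_tail_le {P ν : Measure ℝ} [IsProbabilityMeasure P] [IsProbabilityMeasure ν]
    (hP : Integrable id P) {M N : ℝ → ENNReal} (hM : Measurable M) (hN : Measurable N)
    (hpos : ∀ t, 0 < t → ν (Ioi t) ≤ P (Ioi t) + M t)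
    (hneg : ∀ t, 0 < t → ν (Iic (-t)) ≤ P (Iic (-t)))
    (hneg' : ∀ t, 0 < t → P (Iic (-t)) ≤ ν (Iic (-t)) + N t)
    {ε : ℝ} (hε : 0 ≤ ε)
    (hMN : (∫⁻ t in Ioi (0 : ℝ), M t) + ∫⁻ t in Ioi (0 : ℝ), N t ≤ ENNReal.ofReal ε) :
    Integrable id ν ∧ ∫ t, t ∂ν ≤ ∫ t, t ∂P + ε := by
  have cakePos : ∀ Q : Measure ℝ,
      ∫⁻ t, ENNReal.ofReal t ∂Q = ∫⁻ t in Ioi (0 : ℝ), Q (Ioi t) := by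
    intro Q
    have h := lintegral_eq_lintegral_meas_lt Q (f := fun t : ℝ => max t 0)
      (Eventually.of_forall fun t => le_max_right _ _) (by fun_prop)
    simp only [ENNReal.ofReal_max, ENNReal.ofReal_zero, zero_le, max_eq_left] at h
    rw [h]
    refine setLIntegral_congr_fun measurableSet_Ioi fun t ht => ?_
    congr 1
    ext s
    simp [not_lt.2 (le_of_lt (show (0:ℝ) < t from ht))]
  have cakeNeg : ∀ Q : Measure ℝ,
      ∫⁻ t, ENNReal.ofReal (-t) ∂Q = ∫⁻ t in Ioi (0 : ℝ), Q (Iic (-t)) := by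
    intro Q
    have h := lintegral_eq_lintegral_meas_le Q (f := fun t : ℝ => max (-t) 0)
      (Eventually.of_forall fun t => le_max_right _ _) (by fun_prop)
    simp only [ENNReal.ofReal_max, ENNReal.ofReal_zero, zero_le, max_eq_left] at h
    rw [h]
    refine setLIntegral_congr_fun measurableSet_Ioi fun t ht => ?_
    congr 1
    ext s
    simp [not_le.2 (show (0:ℝ) < t from ht), le_neg]
  have hPpos : ∫⁻ t, ENNReal.ofReal t ∂P < ⊤ := hP.lintegral_lt_top
  have hPneg : ∫⁻ t, ENNReal.ofReal (-t) ∂P < ⊤ := hP.neg.lintegral_lt_top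
  have h1 : ∫⁻ t, ENNReal.ofReal t ∂ν
      ≤ ∫⁻ t, ENNReal.ofReal t ∂P + ∫⁻ t in Ioi (0 : ℝ), M t := by
    rw [cakePos, cakePos, ← lintegral_add_right _ hM]
    exact setLIntegral_mono' measurableSet_Ioi fun t ht => hpos t ht
  have h2 : ∫⁻ t, ENNReal.ofReal (-t) ∂ν ≤ ∫⁻ t, ENNReal.ofReal (-t) ∂P := by
    rw [cakeNeg, cakeNeg]
    exact setLIntegral_mono' measurableSet_Ioi fun t ht => hneg t ht
  have h3 : ∫⁻ t, ENNReal.ofReal (-t) ∂P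
      ≤ ∫⁻ t, ENNReal.ofReal (-t) ∂ν + ∫⁻ t in Ioi (0 : ℝ), N t := by
    rw [cakeNeg, cakeNeg, ← lintegral_add_right _ hN]
    exact setLIntegral_mono' measurableSet_Ioi fun t ht => hneg' t ht
  have hMf : ∫⁻ t in Ioi (0 : ℝ), M t ≠ ⊤ :=
    ne_top_of_le_ne_top ENNReal.ofReal_ne_top (le_self_add.trans hMN)
  have hNf : ∫⁻ t in Ioi (0 : ℝ), N t ≠ ⊤ :=
    ne_top_of_le_ne_top ENNReal.ofReal_ne_top (le_add_self.trans hMN)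
  have hνpos : ∫⁻ t, ENNReal.ofReal t ∂ν ≠ ⊤ :=
    ne_top_of_le_ne_top (ENNReal.add_ne_top.2 ⟨hPpos.ne, hMf⟩) h1
  have hνneg : ∫⁻ t, ENNReal.ofReal (-t) ∂ν ≠ ⊤ := ne_top_of_le_ne_top hPneg.ne h2
  have hint : Integrable id ν := by
    refine ⟨measurable_id.aestronglyMeasurable, ?_⟩
    rw [hasFiniteIntegral_iff_norm]
    have : ∀ t : ℝ, ENNReal.ofReal ‖id t‖ = ENNReal.ofReal t + ENNReal.ofReal (-t) := by
      intro t
      rcases le_total 0 t with h | h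
      · simp [abs_of_nonneg h, ENNReal.ofReal_of_nonpos (neg_nonpos.2 h)]
      · simp [abs_of_nonpos h, ENNReal.ofReal_of_nonpos h]
    simp_rw [this]
    rw [lintegral_add_left (by fun_prop)]
    exact ENNReal.add_lt_top.2 ⟨hνpos.lt_top, hνneg.lt_top⟩
  refine ⟨hint, ?_⟩
  have e1 := integral_eq_lintegral_pos_part_sub_lintegral_neg_part hint
  have e2 := integral_eq_lintegral_pos_part_sub_lintegral_neg_part hP
  simp only [id] at e1 e2
  rw [e1, e2]
  have r1 := ENNReal.toReal_mono (ENNReal.add_ne_top.2 ⟨hPpos.ne, hMf⟩) h1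
  have r3 := ENNReal.toReal_mono (ENNReal.add_ne_top.2 ⟨hνneg, hNf⟩) h3
  have r4 := ENNReal.toReal_mono ENNReal.ofReal_ne_top hMN
  rw [ENNReal.toReal_add hPpos.ne hMf] at r1
  rw [ENNReal.toReal_add hνneg hNf] at r3
  rw [ENNReal.toReal_add hMf hNf, ENNReal.toReal_ofReal hε] at r4
  linarith

/-- Since `g' → 0`, the function `exp (-g)` is long-tailed. -/
lemma tendsto_sub_shift {g : ℝ → ℝ} (hg_mono : StrictMono g) (hg_diff : Differentiable ℝ g)
    (hg_deriv : Tendsto (deriv g) atTop (nhds 0)) {y : ℝ} (hy : 0 ≤ y) :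
    Tendsto (fun x => g x - g (x - y)) atTop (nhds 0) := by
  rcases hy.eq_or_lt with rfl | hy
  · simp
  refine tendsto_order.2 ⟨fun b hb => Eventually.of_forall fun x => ?_, fun b hb => ?_⟩
  · have := hg_mono.monotone (show x - y ≤ x by linarith)
    linarith
  · have h := (tendsto_order.1 hg_deriv).2 (b / y) (by positivity)
    obtain ⟨N, hN⟩ := eventually_atTop.1 h
    filter_upwards [eventually_ge_atTop (N + y)] with x hx
    obtain ⟨c, hc, hce⟩ := exists_deriv_eq_slope g (show x - y < x by linarith)
      hg_diff.continuous.continuousOn hg_diff.differentiableOn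
    have := hN c (by linarith [hc.1])
    rw [hce, sub_sub_cancel, div_lt_div_iff_of_pos_right hy] at this
    exact this

/-- A tail function that eventually equals `C exp (-g)` is strong subexponential. By symmetry the
convolution is twice its part over `[0, x / 2]`; after division by `G x` the integrand tends
pointwise to `G y`, and the bound on `g x - g (x - y)` dominates it by a multiple of
`exp (-(1 - γ) g y)` for large `y`. -/
lemma isStrongSubexp_of_tail {G : ℝ → ℝ} (hG_pos : ∀ x, 0 < G x) (hG_le : ∀ x, G x ≤ 1)
    (hG_anti : Antitone G) {g : ℝ → ℝ} {C R γ x₀ A : ℝ} (hC : 0 < C)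
    (hG_eq : ∀ x, R ≤ x → G x = C * Real.exp (-g x))
    (hg_mono : StrictMono g) (hg_diff : Differentiable ℝ g)
    (hg_deriv : Tendsto (deriv g) atTop (nhds 0))
    (hg_int : IntegrableOn (fun x => Real.exp (-(1 - γ) * g x)) (Set.Ici 1))
    (hg_C3 : ∀ x y : ℝ, x₀ < y → y ≤ x / 2 → g x - g (x - y) ≤ γ * g y + A) :
    IsStrongSubexp G := by
  have hGm : Measurable G := hG_anti.measurable
  have hratio : ∀ x y, R ≤ x → R ≤ x - y → G (x - y) / G x = Real.exp (g x - g (x - y)) := by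
    intro x y h1 h2
    rw [hG_eq _ h1, hG_eq _ h2, mul_div_mul_left _ _ hC.ne', ← Real.exp_sub]
    ring_nf
  set L := max (max 1 R) x₀ with hL
  have hL1 : 1 ≤ L := (le_max_left _ _).trans (le_max_left _ _)
  have hLR : R ≤ L := (le_max_right _ _).trans (le_max_left _ _)
  have hLx : x₀ ≤ L := le_max_right _ _
  -- `D` dominates both `G` and the normalised integrand
  set D : ℝ → ℝ := fun y => if y ≤ L then Real.exp 1
    else C * Real.exp A * Real.exp (-(1 - γ) * g y) with hD
  have hDint : IntegrableOn D (Ioi 0) := by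
    rw [← Ioc_union_Ioi_eq_Ioi (show (0:ℝ) ≤ L by linarith)]
    refine IntegrableOn.union ?_ ?_
    · refine IntegrableOn.congr_fun (f := fun _ => Real.exp 1) (by simp)
        (fun y hy => by simp [hD, hy.2]) measurableSet_Ioc
    · refine IntegrableOn.congr_fun
        (f := fun y => C * Real.exp A * Real.exp (-(1 - γ) * g y)) ?_
        (fun y hy => by simp [hD, not_le.2 (show L < y from hy)]) measurableSet_Ioi
      exact (hg_int.mono_set fun y (hy : L < y) => (hL1.trans hy.le : (1:ℝ) ≤ y)).const_mul _
  have hGD : ∀ y, G y ≤ D y := by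
    intro y
    by_cases h : y ≤ L
    · simp only [hD, if_pos h]
      exact (hG_le y).trans (Real.one_le_exp zero_le_one)
    · simp only [hD, if_neg h]
      rw [hG_eq y (hLR.trans (not_le.1 h).le), mul_assoc, ← Real.exp_add]
      gcongr
      -- applied at `x = 2 y`, the increment bound gives `0 ≤ γ g y + A`
      have := hg_C3 (2 * y) y (hLx.trans_lt (not_le.1 h)) (by linarith)
      have h2 := hg_mono.monotone (show 2 * y - y ≤ 2 * y by linarith [not_le.1 h])
      nlinarith
  have hGint : IntegrableOn G (Ioi 0) := by
    refine Integrable.mono' hDint hGm.aestronglyMeasurable (Eventually.of_forall fun y => ?_)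
    rw [Real.norm_of_nonneg (hG_pos y).le]
    exact hGD y
  refine ⟨hG_pos, hGint, ?_⟩
  set m := ∫ y in Ioi (0:ℝ), G y with hm
  have hm_pos : 0 < m := by
    rw [hm, setIntegral_pos_iff_support_of_nonneg_ae
      (Eventually.of_forall fun y => (hG_pos y).le) hGint]
    have : Function.support G = univ := by
      ext y; simp [(hG_pos y).ne']
    simp [this]
  have hhalf : ∀ x, ∫ y in (0:ℝ)..x, G (x - y) * G y
      = 2 * ∫ y in (0:ℝ)..(x / 2), G (x - y) * G y := by
    intro x
    have hii : ∀ p q, IntervalIntegrable (fun y => G (x - y) * G y) volume p q := by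
      intro p q
      rw [intervalIntegrable_iff]
      refine Measure.integrableOn_of_bounded (M := 1) (by simp)
        (by fun_prop) (Eventually.of_forall fun y => ?_)
      rw [Real.norm_of_nonneg (mul_pos (hG_pos _) (hG_pos _)).le]
      exact mul_le_one₀ (hG_le _) (hG_pos _).le (hG_le _)
    rw [← intervalIntegral.integral_add_adjacent_intervals (hii 0 (x/2)) (hii (x/2) x)]
    have := intervalIntegral.integral_comp_sub_left (a := 0) (b := x / 2)
      (fun y => G (x - y) * G y) x
    simp only [sub_sub_cancel, sub_zero, show x - x / 2 = x / 2 by ring] at this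
    rw [← this, two_mul]
    congr 1
    exact intervalIntegral.integral_congr fun y _ => mul_comm _ _
  set K : ℝ → ℝ → ℝ := fun x => indicator (Iic (x / 2)) fun y => G (x - y) / G x * G y with hK
  have hKlim : Tendsto (fun x => ∫ y in Ioi (0:ℝ), K x y) atTop (nhds m) := by
    refine tendsto_integral_filter_of_dominated_convergence D ?_ ?_ hDint ?_
    · refine Eventually.of_forall fun x => ?_
      exact (Measurable.indicator (by fun_prop) measurableSet_Iic).aestronglyMeasurable
    · have hL0 := (tendsto_order.1 (tendsto_sub_shift hg_mono hg_diff hg_deriv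
        (show 0 ≤ L by linarith))).2 1 one_pos
      filter_upwards [hL0, eventually_ge_atTop (2 * L)] with x hx1 hx2
      refine (ae_restrict_mem measurableSet_Ioi).mono fun y (hy : 0 < y) => ?_
      by_cases hyx : y ≤ x / 2
      · simp only [hK, indicator_of_mem (mem_Iic.2 hyx)]
        rw [Real.norm_of_nonneg (mul_pos (div_pos (hG_pos _) (hG_pos _)) (hG_pos _)).le,
          hratio x y (by linarith) (by linarith)]
        by_cases hyL : y ≤ L
        · simp only [hD, if_pos hyL]
          have : g (x - L) ≤ g (x - y) := hg_mono.monotone (by linarith)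
          calc Real.exp (g x - g (x - y)) * G y ≤ Real.exp 1 * 1 := by
                exact mul_le_mul (Real.exp_le_exp.2 (by linarith)) (hG_le y) (hG_pos y).le
                  (Real.exp_pos _).le
            _ = _ := mul_one _
        · simp only [hD, if_neg hyL]
          have hyL' := not_le.1 hyL
          rw [hG_eq y (hLR.trans hyL'.le)]
          have := hg_C3 x y (hLx.trans_lt hyL') hyx
          rw [mul_left_comm, mul_assoc, ← Real.exp_add, ← Real.exp_add]
          exact mul_le_mul_of_nonneg_left (Real.exp_le_exp.2 (by linarith)) hC.le
      · simp only [hK, indicator_of_notMem (show y ∉ Iic (x / 2) from hyx), norm_zero]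
        exact (hG_pos y).le.trans (hGD y)
    · refine (ae_restrict_mem measurableSet_Ioi).mono fun y (hy : 0 < y) => ?_
      have h := (Real.continuous_exp.tendsto 0).comp
        (tendsto_sub_shift hg_mono hg_diff hg_deriv hy.le)
      have h' := h.mul_const (G y)
      rw [Real.exp_zero, one_mul] at h'
      refine h'.congr' ?_
      filter_upwards [eventually_ge_atTop (2 * y), eventually_ge_atTop (R + y)] with x h1 h2
      simp only [hK, indicator_of_mem (show y ∈ Iic (x / 2) from mem_Iic.2 (by linarith)),
        Function.comp]
      rw [hratio x y (by linarith) (by linarith)]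
  have := hKlim.div_const m
  rw [div_self hm_pos.ne'] at this
  refine this.congr' ?_
  filter_upwards [eventually_ge_atTop 0] with x hx
  rw [hhalf, intervalIntegral.integral_of_le (by linarith)]
  have : ∫ y in Ioi (0:ℝ), K x y = (∫ y in Ioc 0 (x / 2), G (x - y) * G y) / G x := by
    simp only [hK]
    rw [setIntegral_indicator measurableSet_Iic, Ioi_inter_Iic, ← integral_div]
    refine integral_congr_ae (Eventually.of_forall fun y => ?_)
    simp only
    ring
  rw [this]
  field_simp [(hG_pos x).ne']

/-- A positive decreasing integrable `k` has `R k(R) ≤ 2 ∫_{R/2}^R k → 0`, so far enough out both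
the rectangle of height `C k(R)` over an interval of length `R + T` and the remaining tail
integral are negligible. -/
lemma exists_cutoff {k : ℝ → ℝ} (hk_pos : ∀ x, 0 < k x) (hk_anti : Antitone k)
    (hk_int : IntegrableOn k (Ici 1)) {C η T : ℝ} (hC : 0 < C) (hη : 0 < η) :
    ∃ R, 1 ≤ R ∧ C * k R * (R + T) + C * ∫ x in Ioi R, k x < η ∧ C * k R < η := by
  have hk1 : IntegrableOn k (Ioi 1) := hk_int.mono_set Ioi_subset_Ici_self
  have h := intervalIntegral_tendsto_integral_Ioi 1 hk1 tendsto_id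
  -- `R = 2 S`: the total is at most `5 C ∫_S^∞ k` once `S ≥ max 1 T`
  have h' := (tendsto_order.1 h).1 ((∫ x in Ioi 1, k x) - η / (5 * C))
    (by have : 0 < η / (5 * C) := by positivity
        linarith)
  obtain ⟨S, hS, hS1, hST⟩ :=
    (h'.and ((eventually_ge_atTop 1).and (eventually_ge_atTop T))).exists
  simp only [id] at hS
  have split : ∀ a b : ℝ, 1 ≤ a → a ≤ b →
      ∫ x in Ioi a, k x = (∫ x in Ioc a b, k x) + ∫ x in Ioi b, k x := by
    intro a b ha hab
    rw [← Ioc_union_Ioi_eq_Ioi hab, setIntegral_union (Ioc_disjoint_Ioi le_rfl) measurableSet_Ioi]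
    · exact hk1.mono_set fun x hx => ha.trans_lt hx.1
    · exact hk1.mono_set fun x hx => (ha.trans hab).trans_lt hx
  have s1 := split 1 S le_rfl hS1
  rw [intervalIntegral.integral_of_le hS1] at hS
  have s2 := split S (2 * S) hS1 (by linarith)
  have hlow : S * k (2 * S) ≤ ∫ x in Ioc S (2 * S), k x := by
    have : ∫ x in Ioc S (2 * S), k (2 * S) ≤ ∫ x in Ioc S (2 * S), k x := by
      refine setIntegral_mono_on (by simp) (hk1.mono_set fun x hx => hS1.trans_lt hx.1)
        measurableSet_Ioc fun x hx => hk_anti hx.2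
    rw [setIntegral_const, Measure.real, Real.volume_Ioc,
      ENNReal.toReal_ofReal (by linarith), smul_eq_mul] at this
    linarith
  have hJ : ∫ x in Ioi S, k x < η / (5 * C) := by linarith
  rw [lt_div_iff₀ (by positivity)] at hJ
  have hJ2 : 0 ≤ ∫ x in Ioi (2 * S), k x := integral_nonneg fun x => (hk_pos x).le
  have hk0 := hk_pos (2 * S)
  set J2 := ∫ x in Ioi (2 * S), k x
  set J := ∫ x in Ioi S, k x
  have a1 : C * (S * k (2 * S)) + C * J2 ≤ C * J := by
    rw [← mul_add]; exact mul_le_mul_of_nonneg_left (by linarith) hC.le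
  have a0 : 0 ≤ C * J2 := by positivity
  have a2 : C * k (2 * S) * T ≤ C * k (2 * S) * S := by gcongr
  have a3 : C * k (2 * S) * 1 ≤ C * k (2 * S) * S := by gcongr
  refine ⟨2 * S, by linarith, ?_, ?_⟩ <;> nlinarith

/-- **Lemma 2.** If `ξ` has right-unbounded support, mean `-a < 0`, and
`E exp(g(ξ)) < ∞` where `g` satisfies (C1)–(C3), then for any `δ ∈ (0, a)` there is a
random variable `ξ̃` (described by its distribution `ν` on `ℝ`) with `ξ ≤_st ξ̃`,
whose distribution is strong subexponential, and with `E ξ̃ < -a + δ < 0`. -/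
theorem exists_strong_subexp_majorant
    {Ω : Type*} [MeasurableSpace Ω] {μ : Measure Ω} [IsProbabilityMeasure μ]
    (ξ : Ω → ℝ) (hmeas : Measurable ξ)
    (hunbdd : ∀ x : ℝ, 0 < μ {ω | x < ξ ω})
    (a : ℝ) (ha : 0 < a)
    (hint : Integrable ξ μ) (hmean : ∫ ω, ξ ω ∂μ = -a)
    (g : ℝ → ℝ) (γ x₀ A : ℝ)
    -- condition (C1)
    (hg_pos : ∀ x, 0 < g x) (hg_mono : StrictMono g) (hg_diff : Differentiable ℝ g)
    -- condition (C2)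
    (hg_deriv : Tendsto (deriv g) atTop (nhds 0))
    -- condition (C3)
    (hγ : γ ∈ Set.Ioo (0:ℝ) 1)
    (hg_int : IntegrableOn (fun x => Real.exp (-(1 - γ) * g x)) (Set.Ici 1))
    (hx₀ : 0 < x₀) (hA : 0 < A)
    (hg_C3 : ∀ x y : ℝ, x₀ < y → y ≤ x / 2 → g x - g (x - y) ≤ γ * g y + A)
    (hgmom : Integrable (fun ω => Real.exp (g (ξ ω))) μ)
    (δ : ℝ) (hδ : δ ∈ Set.Ioo 0 a) :
    ∃ ν : Measure ℝ, IsProbabilityMeasure ν ∧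
      -- ξ ≤_st ξ̃
      (∀ x : ℝ, μ {ω | x < ξ ω} ≤ ν (Set.Ioi x)) ∧
      -- the distribution of ξ̃ is strong subexponential
      IsStrongSubexp (fun x => (ν (Set.Ioi x)).toReal) ∧
      -- E ξ̃ < -a + δ < 0
      Integrable id ν ∧ (∫ t, t ∂ν) < -a + δ ∧ -a + δ < 0 := by
  obtain ⟨hγ0, hγ1⟩ := hγ
  obtain ⟨hδ0, hδa⟩ := hδ
  set P : Measure ℝ := μ.map ξ with hPdef
  have : IsProbabilityMeasure P := Measure.isProbabilityMeasure_map hmeas.aemeasurable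
  have hPIoi : ∀ x, P (Ioi x) = μ {ω | x < ξ ω} := fun x =>
    Measure.map_apply hmeas measurableSet_Ioi
  have hPint : Integrable id P :=
    (integrable_map_measure measurable_id.aestronglyMeasurable hmeas.aemeasurable).2 hint
  have hPmean : ∫ t, t ∂P = -a := by
    rw [hPdef, integral_map hmeas.aemeasurable (by fun_prop), hmean]
  set F := cdf P with hF
  have hFIic : ∀ x, P (Iic x) = ENNReal.ofReal (F x) := fun x => (ofReal_cdf P x).symm
  have hFIoi : ∀ x, P (Ioi x) = ENNReal.ofReal (1 - F x) := by
    intro x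
    rw [← measure_cdf P, StieltjesFunction.measure_Ioi _ (tendsto_cdf_atTop P)]
  set k : ℝ → ℝ := fun x => Real.exp (-g x) with hk
  have hk_pos : ∀ x, 0 < k x := fun x => Real.exp_pos _
  have hk_anti : Antitone k := fun x y hxy =>
    Real.exp_le_exp.2 (neg_le_neg (hg_mono.monotone hxy))
  have hk_int : IntegrableOn k (Ici 1) := by
    refine Integrable.mono' hg_int hk_anti.measurable.aestronglyMeasurable
      (Eventually.of_forall fun x => ?_)
    rw [Real.norm_of_nonneg (hk_pos x).le]
    exact Real.exp_le_exp.2 (by nlinarith [hg_pos x])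
  set C := ∫ ω, Real.exp (g (ξ ω)) ∂μ with hCdef
  have hC : 0 < C := integral_exp_pos hgmom
  have markov : ∀ x, 1 - F x ≤ C * k x := by
    intro x
    have h1 := mul_meas_ge_le_integral_of_nonneg
      (Eventually.of_forall fun ω => (Real.exp_pos (g (ξ ω))).le) hgmom (Real.exp (g x))
    have h2 : 1 - F x ≤ μ.real {ω | Real.exp (g x) ≤ Real.exp (g (ξ ω))} := by
      have : 1 - F x = μ.real {ω | x < ξ ω} := by
        rw [Measure.real, ← hPIoi, hFIoi, ENNReal.toReal_ofReal]
        linarith [cdf_le_one P x]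
      rw [this]
      exact measureReal_mono fun ω (hω : x < ξ ω) => Real.exp_le_exp.2 (hg_mono hω).le
    have h3 : Real.exp (g x) * (1 - F x) ≤ C :=
      (mul_le_mul_of_nonneg_left h2 (Real.exp_pos _).le).trans h1
    calc 1 - F x = Real.exp (g x) * (1 - F x) * k x := by
          rw [hk, mul_right_comm, ← Real.exp_add]; simp
      _ ≤ C * k x := mul_le_mul_of_nonneg_right h3 (hk_pos x).le
  -- left of `-T` the distribution function is at most `1 / 2`
  obtain ⟨T, hT, hT0⟩ : ∃ T, F (-T) < 1 / 2 ∧ 0 ≤ T := by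
    have h := ((tendsto_cdf_atBot P).comp tendsto_neg_atTop_atBot)
    exact (((tendsto_order.1 h).2 (1 / 2) (by norm_num)).and (eventually_ge_atTop 0)).exists
  obtain ⟨R, hR1, hR, hRc⟩ := exists_cutoff hk_pos hk_anti hk_int hC
    (lt_min hδ0 (show (0:ℝ) < 1 / 2 by norm_num))
  have hRδ := hR.trans_le (min_le_left _ _)
  have hRc' := hRc.trans_le (min_le_right _ _)
  set m : ℝ → ℝ := fun x => C * k (max x R) with hm
  have hm_pos : ∀ x, 0 < m x := fun x => mul_pos hC (hk_pos _)
  have hm_anti : Antitone m := fun x y hxy =>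
    mul_le_mul_of_nonneg_left (hk_anti (max_le_max_right R hxy)) hC.le
  have hm_le : ∀ x, m x ≤ C * k R := fun x =>
    mul_le_mul_of_nonneg_left (hk_anti (le_max_right _ _)) hC.le
  have hm_cont : Continuous m := by
    have := hg_diff.continuous
    simp only [hm, hk]
    fun_prop
  have hm_lim : Tendsto m atTop (nhds 0) := by
    refine tendsto_order.2 ⟨fun b hb => Eventually.of_forall fun x => hb.trans (hm_pos x),
      fun b hb => ?_⟩
    obtain ⟨R', -, -, hR'⟩ := exists_cutoff hk_pos hk_anti hk_int hC hb (T := 0)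
    filter_upwards [eventually_ge_atTop R'] with x hx
    exact (mul_le_mul_of_nonneg_left (hk_anti (hx.trans (le_max_left _ _))) hC.le).trans_lt hR'
  let Φ : StieltjesFunction ℝ :=
    { toFun := fun x => min (F x) (1 - m x)
      mono' := fun x y hxy => min_le_min (F.mono hxy) (by linarith [hm_anti hxy])
      right_continuous' := fun x =>
        (F.right_continuous x).min (continuous_const.sub hm_cont).continuousWithinAt }
  have hΦ : ∀ x, Φ x = min (F x) (1 - m x) := fun _ => rfl
  have hΦbot : Tendsto Φ atBot (nhds 0) := by
    refine tendsto_of_tendsto_of_tendsto_of_le_of_le tendsto_const_nhds (tendsto_cdf_atBot P)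
      (fun x => ?_) (fun x => min_le_left _ _)
    exact le_min (cdf_nonneg P x) (by linarith [hm_le x])
  have hΦtop : Tendsto Φ atTop (nhds 1) := by
    have := (tendsto_cdf_atTop P).min (hm_lim.const_sub 1)
    simpa using this
  have : IsProbabilityMeasure Φ.measure := Φ.isProbabilityMeasure hΦbot hΦtop
  have hΦIoi : ∀ x, Φ.measure (Ioi x) = ENNReal.ofReal (1 - Φ x) := fun x =>
    Φ.measure_Ioi hΦtop x
  have hΦIic : ∀ x, Φ.measure (Iic x) = ENNReal.ofReal (Φ x) := fun x => by
    rw [Φ.measure_Iic hΦbot, sub_zero]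
  have hΦlt : ∀ x, Φ x < 1 := fun x => (min_le_right _ _).trans_lt (by linarith [hm_pos x])
  have hΦnn : ∀ x, 0 ≤ Φ x := fun x => le_min (cdf_nonneg P x) (by linarith [hm_le x])
  have hst : ∀ x, P (Ioi x) ≤ Φ.measure (Ioi x) := fun x => by
    rw [hFIoi, hΦIoi]
    exact ENNReal.ofReal_le_ofReal (by linarith [min_le_left (F x) (1 - m x), hΦ x])
  have hG : (fun x => (Φ.measure (Ioi x)).toReal) = fun x => 1 - Φ x := by
    funext x
    rw [hΦIoi, ENNReal.toReal_ofReal (by linarith [hΦlt x])]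
  have hexcess : (∫⁻ t in Ioi (0 : ℝ), ENNReal.ofReal (m t))
      + ∫⁻ t in Ioi (0 : ℝ), (Iic T).indicator (fun _ => ENNReal.ofReal (C * k R)) t
      ≤ ENNReal.ofReal (C * k R * (R + T) + C * ∫ x in Ioi R, k x) := by
    have hJ : 0 ≤ ∫ x in Ioi R, k x := integral_nonneg fun x => (hk_pos x).le
    have hc0 : 0 ≤ C * k R := mul_nonneg hC.le (hk_pos R).le
    have e1 : ∫⁻ t in Ioi (0 : ℝ), ENNReal.ofReal (m t)
        ≤ ENNReal.ofReal (C * k R * R) + ENNReal.ofReal (C * ∫ x in Ioi R, k x) := by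
      rw [← Ioc_union_Ioi_eq_Ioi (show (0:ℝ) ≤ R by linarith),
        lintegral_union measurableSet_Ioi (Ioc_disjoint_Ioi le_rfl)]
      gcongr
      · calc ∫⁻ t in Ioc 0 R, ENNReal.ofReal (m t)
            ≤ ∫⁻ t in Ioc 0 R, ENNReal.ofReal (C * k R) :=
              lintegral_mono fun t => ENNReal.ofReal_le_ofReal (hm_le t)
          _ = ENNReal.ofReal (C * k R * R) := by
              rw [setLIntegral_const, Real.volume_Ioc, sub_zero, ENNReal.ofReal_mul hc0]
      · rw [← integral_const_mul, ofReal_integral_eq_lintegral_ofReal]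
        · refine le_of_eq (setLIntegral_congr_fun measurableSet_Ioi fun t (ht : R < t) => ?_)
          simp only [hm, max_eq_left ht.le]
        · exact (hk_int.mono_set fun x (hx : R < x) => hR1.trans hx.le).const_mul C
        · exact Eventually.of_forall fun t => mul_nonneg hC.le (hk_pos t).le
    have e2 : ∫⁻ t in Ioi (0 : ℝ), (Iic T).indicator (fun _ => ENNReal.ofReal (C * k R)) t
        = ENNReal.ofReal (C * k R * T) := by
      rw [setLIntegral_indicator measurableSet_Iic, Iic_inter_Ioi, setLIntegral_const,
        Real.volume_Ioc, sub_zero, ENNReal.ofReal_mul hc0]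
    rw [e2]
    refine (add_le_add_left e1 _).trans (le_of_eq ?_)
    rw [← ENNReal.ofReal_add (by positivity) (by positivity),
      ← ENNReal.ofReal_add (by positivity) (by positivity)]
    congr 1
    ring
  have hexcess0 : 0 ≤ C * k R * (R + T) + C * ∫ x in Ioi R, k x :=
    add_nonneg (mul_nonneg (mul_nonneg hC.le (hk_pos R).le) (by linarith))
      (mul_nonneg hC.le (integral_nonneg fun x => (hk_pos x).le))
  obtain ⟨hνint, hνmean⟩ := mean_le_of_tail_le (ν := Φ.measure) hPint
    (M := fun t => ENNReal.ofReal (m t))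
    (N := (Iic T).indicator fun _ => ENNReal.ofReal (C * k R))
    hm_cont.measurable.ennreal_ofReal (measurable_const.indicator measurableSet_Iic)
    (fun t _ => by
      rw [hΦIoi, hFIoi, ← ENNReal.ofReal_add (by linarith [cdf_le_one P t]) (hm_pos t).le]
      refine ENNReal.ofReal_le_ofReal ?_
      rw [hΦ]
      rcases min_cases (F t) (1 - m t) with h | h <;>
        linarith [hm_pos t, cdf_le_one P t])
    (fun t _ => by
      rw [hΦIic, hFIic]
      exact ENNReal.ofReal_le_ofReal (min_le_left _ _))
    (fun t ht => by
      rw [hΦIic, hFIic]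
      by_cases htT : t ≤ T
      · rw [indicator_of_mem (mem_Iic.2 htT),
          ← ENNReal.ofReal_add (hΦnn _) (mul_nonneg hC.le (hk_pos R).le)]
        refine ENNReal.ofReal_le_ofReal ?_
        rw [hΦ]
        rcases min_cases (F (-t)) (1 - m (-t)) with h | h <;>
          linarith [hm_le (-t), hm_pos (-t), cdf_le_one P (-t)]
      · -- left of `-T` the minimum defining `Φ` is attained by `F`
        rw [indicator_of_notMem (by simpa using htT), add_zero]
        refine ENNReal.ofReal_le_ofReal (le_min le_rfl ?_)
        have := F.mono (show -t ≤ -T by linarith [not_le.1 htT])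
        linarith [hm_le (-t)])
    hexcess0 hexcess
  refine ⟨Φ.measure, inferInstance, fun x => (hPIoi x) ▸ hst x, ?_, hνint, by linarith,
    by linarith⟩
  rw [hG]
  refine isStrongSubexp_of_tail (fun x => by linarith [hΦlt x]) (fun x => by linarith [hΦnn x])
    (fun x y hxy => by linarith [Φ.mono hxy]) hC (R := R) (fun x hx => ?_) hg_mono hg_diff
    hg_deriv hg_int hg_C3
  have hmx : m x = C * k x := by simp only [hm, max_eq_left hx]
  rw [hΦ, min_eq_right (by linarith [markov x]), sub_sub_cancel, hmx]
end

section
/- Let ζ be a nonnegative random variable with E ζ^α < ∞ for some α > 0. Then there exists a random variable ζ̂ such that E ζ̂^α < ∞, the tail function t ↦ P(ζ̂ > t) is regularly varying with exponent −α (i.e., P(ζ̂ > λ t)/P(ζ̂ > t) → λ^{−α} as t → ∞, for every λ > 0), and ζ ≤_st ζ̂. -/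
/-!
In logarithmic scale the moment condition says that `a n = exp (α n) P(ζ > exp n)` is summable,
and regular variation of a tail with exponent `-α` says that the tail of `log ζ̂` is multiplied by
`exp (-α c)`, asymptotically, under a shift by `c`. It is enough to find a density of the form
`ℓ s * exp (-α s)` for `log ζ̂` at infinity, where `ℓ` is integrable, `ℓ (s + c) / ℓ s → 1` for all
`c`, and `ℓ` dominates a constant multiple of `a n` near `n`: integrating the density gives the
shift ratio of the tail (`tendsto_tail_integral_ratio`), integrability of `ℓ` is the finiteness of
`E ζ̂^α`, and the mass on `[n + 1, n + 2)` gives the stochastic domination. Domination at bounded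
arguments costs nothing: the density is used only beyond a large `S`, and the rest of the mass is
an atom at `exp S`.

The step function with values `b n` serves as `ℓ` once `b` is a summable majorant of the
multiple of `a` with `b (n + 1) / b n → 1`. The existence of such a `b` (`exists_slow_majorant`) is
the heart of the proof. It smooths `a` with a two-sided kernel `κ k n` that decays away
from `n = k` at a rate `1 / K n` which itself tends to zero. This makes the ratio tend to one, at
the price `∑ n, κ k n = O(1 + K k)`; `exists_weights` provides weights `K` tending to infinity so
slowly that `∑ a k * K k` is still finite, and slowly enough in `n` (increments at most `1 / 2`)
for the kernel sums to be controlled.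
-/

open MeasureTheory ProbabilityTheory Filter Set

/-! ### Slowly varying summable majorants of sequences -/

/-- Summability of a positive sequence survives multiplication by some weights `K` that tend to
infinity; `K` can moreover be taken nondecreasing with increments at most `1 / 2`. The weights are
kept below `R n ^ (-1/2)`, where `R n` is the `n`-th tail sum of `a`, because `∑ a n / √(R n)`
is dominated by a telescoping sum. -/
lemma exists_weights (a : ℕ → ℝ) (ha : ∀ n, 0 < a n) (hs : Summable a) :
    ∃ K : ℕ → ℝ, (∀ n, 0 < K n) ∧ Monotone K ∧ (∀ n, K (n + 1) ≤ K n + 1 / 2) ∧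
      Tendsto K atTop atTop ∧ Summable fun n => a n * K n := by
  set R : ℕ → ℝ := fun n => ∑' k, a (k + n) with hR
  have hsn : ∀ n, Summable fun k => a (k + n) := fun n => (summable_nat_add_iff n).2 hs
  have hRpos : ∀ n, 0 < R n := fun n => (hsn n).tsum_pos (fun k => (ha _).le) 0 (ha _)
  have hRsucc : ∀ n, R n = a n + R (n + 1) := by
    intro n
    simp only [hR]
    rw [(hsn n).tsum_eq_zero_add]
    simp [add_comm, add_left_comm]
  have hR0 : Tendsto R atTop (nhds 0) := tendsto_sum_nat_add a
  set s : ℕ → ℝ := fun n => √(R n) with hsdef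
  have hspos : ∀ n, 0 < s n := fun n => Real.sqrt_pos.2 (hRpos n)
  have hs2 : ∀ n, s n ^ 2 = R n := fun n => Real.sq_sqrt (hRpos n).le
  have hsanti : ∀ n, s (n + 1) ≤ s n := fun n =>
    Real.sqrt_le_sqrt (by rw [hRsucc n]; linarith [ha n])
  have hs0 : Tendsto s atTop (nhds 0) := by
    simpa [Function.comp_def] using (Real.continuous_sqrt.tendsto 0).comp hR0
  have hsinv : Tendsto (fun n => (s n)⁻¹) atTop atTop :=
    Tendsto.inv_tendsto_nhdsGT_zero
      (tendsto_nhdsWithin_iff.2 ⟨hs0, Eventually.of_forall hspos⟩)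
  let K : ℕ → ℝ := fun n => Nat.rec (s 0)⁻¹ (fun n k => min (k + 1 / 2) (s (n + 1))⁻¹) n
  have hK0 : K 0 = (s 0)⁻¹ := rfl
  have hKs : ∀ n, K (n + 1) = min (K n + 1 / 2) (s (n + 1))⁻¹ := fun n => rfl
  have hKle : ∀ n, K n ≤ (s n)⁻¹ := by
    intro n
    cases n with
    | zero => exact hK0.le
    | succ n => rw [hKs]; exact min_le_right _ _
  have hmono : Monotone K := monotone_nat_of_le_succ fun n => by
    rw [hKs]
    refine le_min (by linarith) ((hKle n).trans ?_)
    exact inv_anti₀ (hspos _) (hsanti n)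
  have hKpos : ∀ n, 0 < K n := fun n =>
    (inv_pos.2 (hspos 0)).trans_le (hmono (Nat.zero_le n))
  refine ⟨K, hKpos, hmono, fun n => by rw [hKs]; exact min_le_left _ _, ?_, ?_⟩
  · rcases tendsto_atTop_of_monotone hmono with h | ⟨l, hl⟩
    · exact h
    · exfalso
      -- A finite limit `l` is exceeded at the next step once `l - 1 / 2 < K n` and the cap
      -- `(s (n + 1))⁻¹` is above `l`.
      have hle : ∀ n, K n ≤ l := fun n => hmono.ge_of_tendsto hl n
      obtain ⟨n, h1, h2⟩ := ((hl.eventually (lt_mem_nhds (show l - 1 / 2 < l by linarith))).and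
        ((tendsto_add_atTop_iff_nat 1).2 hsinv |>.eventually_gt_atTop l)).exists
      have := hle (n + 1)
      rw [hKs] at this
      rcases min_le_iff.1 this with h | h <;> linarith
  · refine summable_of_sum_range_le (c := 2 * s 0)
      (fun n => mul_nonneg (ha n).le (hKpos n).le) fun N => ?_
    suffices h : ∑ i ∈ Finset.range N, a i * K i ≤ 2 * s 0 - 2 * s N by
      linarith [hspos N]
    induction N with
    | zero => simp
    | succ N ih =>
      rw [Finset.sum_range_succ]
      have h1 : a N * K N ≤ 2 * s N - 2 * s (N + 1) := by
        have h2 : a N = s N ^ 2 - s (N + 1) ^ 2 := by rw [hs2, hs2, hRsucc N]; ring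
        calc a N * K N ≤ a N * (s N)⁻¹ := mul_le_mul_of_nonneg_left (hKle N) (ha N).le
          _ = a N / s N := rfl
          _ ≤ _ := by
            rw [div_le_iff₀ (hspos N), h2]
            nlinarith [hsanti N, sq_nonneg (s N - s (N + 1))]
      linarith

/-- A kernel whose logarithm varies in `n` at rate `1 / K n`, and whose sums over `n` grow only like
`K k`. It is `κ k n = min (P k / P n) (P n / P k)` with
`P n = ∏ i < n, (1 + 1 / K i)`. -/
lemma exists_kernel (K : ℕ → ℝ) (hK : ∀ n, 0 < K n) (hKm : Monotone K)
    (hKl : ∀ n, K (n + 1) ≤ K n + 1 / 2) :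
    ∃ κ : ℕ → ℕ → ℝ, (∀ k n, 0 < κ k n) ∧ (∀ k, κ k k = 1) ∧
      (∀ k n, κ k (n + 1) ≤ (1 + (K n)⁻¹) * κ k n) ∧
      (∀ k n, κ k n ≤ (1 + (K n)⁻¹) * κ k (n + 1)) ∧
      ∀ k N, ∑ n ∈ Finset.range N, κ k n ≤ 1 + 3 * K k := by
  set P : ℕ → ℝ := fun n => ∏ i ∈ Finset.range n, (1 + (K i)⁻¹) with hPdef
  have hP : ∀ n, 0 < P n := fun n => Finset.prod_pos fun i _ => by have := hK i; positivity
  have hPs : ∀ n, P (n + 1) = P n * (1 + (K n)⁻¹) := fun n => Finset.prod_range_succ _ _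
  have hPs' : ∀ n, K n * P (n + 1) = P n * (K n + 1) := fun n => by
    rw [hPs]; have := (hK n).ne'; field_simp
  let κ : ℕ → ℕ → ℝ := fun k n => min (P k / P n) (P n / P k)
  have hκ : ∀ k n, 0 < κ k n := fun k n => lt_min (div_pos (hP _) (hP _)) (div_pos (hP _) (hP _))
  have hκ1 : ∀ k, κ k k = 1 := fun k => by simp [κ, (hP k).ne']
  refine ⟨κ, hκ, hκ1, ?_, ?_, ?_⟩
  · intro k n
    have h0 := hK n; have h1 := hP n; have h2 := hP k
    have hi : 0 < (K n)⁻¹ := inv_pos.2 h0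
    simp only [κ]
    rw [mul_min_of_nonneg _ _ (by positivity)]
    refine min_le_min ?_ ?_
    · calc P k / P (n + 1) ≤ P k / P n :=
            div_le_div_of_nonneg_left h2.le h1 (by rw [hPs]; nlinarith)
        _ ≤ _ := le_mul_of_one_le_left (by positivity) (by linarith)
    · rw [hPs]; apply le_of_eq; ring
  · intro k n
    have h0 := hK n; have h1 := hP n; have h2 := hP k; have h3 := hP (n + 1)
    have hi : 0 < (K n)⁻¹ := inv_pos.2 h0
    simp only [κ]
    rw [mul_min_of_nonneg _ _ (by positivity)]
    refine min_le_min ?_ ?_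
    · rw [hPs]; apply le_of_eq; field_simp
    · calc P n / P k ≤ P (n + 1) / P k :=
            div_le_div_of_nonneg_right (by rw [hPs]; nlinarith) h2.le
        _ ≤ _ := le_mul_of_one_le_left (by positivity) (by linarith)
  · intro k
    -- Left of the diagonal, `P n = K n * (P (n + 1) - P n)` with `K n ≤ K k` telescopes.
    have hlo : ∀ N ≤ k, ∑ n ∈ Finset.range N, κ k n ≤ K k * (P N / P k) := by
      intro N
      induction N with
      | zero => intro _; simpa using by have := hK k; have := hP 0; have := hP k; positivity
      | succ N ih =>
        intro hN
        rw [Finset.sum_range_succ]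
        have h1 : κ k N ≤ P N / P k := min_le_right _ _
        have h2 : P N ≤ K k * P (N + 1) - K k * P N := by
          rw [hPs N]
          have : 1 ≤ K k * (K N)⁻¹ := by
            rw [← div_eq_mul_inv, one_le_div (hK N)]; exact hKm (by omega)
          nlinarith [hP N]
        have h3 : P N / P k ≤ K k * (P (N + 1) / P k) - K k * (P N / P k) := by
          rw [← mul_div_assoc, ← mul_div_assoc, ← sub_div]
          exact div_le_div_of_nonneg_right h2 (hP k).le
        linarith [ih (by omega)]
    -- Right of the diagonal, `K n / P n` drops by at least `1 / (2 * P (n + 1))` at each step,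
    -- because `K` grows by at most `1 / 2`.
    have hhi : ∀ m, ∑ n ∈ Finset.range (k + 1 + m), κ k n
        ≤ 1 + 3 * K k - 2 * K (k + m) * (P k / P (k + m)) := by
      intro m
      induction m with
      | zero =>
        have := hlo k le_rfl
        rw [div_self (hP k).ne'] at this
        simp only [add_zero, Finset.sum_range_succ, hκ1, div_self (hP k).ne']
        linarith
      | succ m ih =>
        rw [← add_assoc, Finset.sum_range_succ]
        have h1 : κ k (k + 1 + m) ≤ P k / P (k + m + 1) := by
          rw [show k + 1 + m = k + m + 1 by omega]; exact min_le_left _ _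
        have h2 : 2 * K (k + m) * (P k / P (k + m)) =
            2 * (K (k + m) + 1) * (P k / P (k + m + 1)) := by
          have := hPs' (k + m); have h4 := (hP (k + m)).ne'; have h5 := (hP (k + m + 1)).ne'
          rw [mul_div_assoc', mul_div_assoc', div_eq_div_iff h4 h5]
          linear_combination 2 * P k * this
        have h3 : 0 < P k / P (k + m + 1) := div_pos (hP _) (hP _)
        have h4 := hKl (k + m)
        rw [← add_assoc]
        nlinarith
    intro N
    calc _ ≤ ∑ n ∈ Finset.range (k + 1 + N), κ k n :=
          Finset.sum_le_sum_of_subset_of_nonneg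
            (Finset.range_mono (by omega)) fun _ _ _ => (hκ _ _).le
      _ ≤ _ := hhi N
      _ ≤ _ := by
        have := hK (k + N); have := hP k; have := hP (k + N)
        have : 0 < 2 * K (k + N) * (P k / P (k + N)) := by positivity
        linarith

/-- A nonnegative summable sequence has a positive summable majorant `b` with
`b (n + 1) / b n → 1`. With `K` as in `exists_weights` and `κ` as in `exists_kernel`, the
majorant is `b n = ∑ k, a k * κ k n`: one step in `n` changes `κ k n` by a factor within
`1 + 1 / K n`, uniformly in `k`, and `∑ n, κ k n ≤ 1 + 3 * K k`. -/
lemma exists_slow_majorant (a : ℕ → ℝ) (ha : ∀ n, 0 ≤ a n) (hs : Summable a) :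
    ∃ b : ℕ → ℝ, (∀ n, 0 < b n) ∧ (∀ n, a n ≤ b n) ∧ Summable b ∧
      Tendsto (fun n => b (n + 1) / b n) atTop (nhds 1) := by
  wlog hpos : ∀ n, 0 < a n generalizing a
  · obtain ⟨b, h1, h2, h3⟩ := this (fun n => a n + (1 / 2) ^ n)
      (fun n => add_nonneg (ha n) (by positivity)) (hs.add summable_geometric_two)
      (fun n => add_pos_of_nonneg_of_pos (ha n) (by positivity))
    exact ⟨b, h1, fun n => le_trans (le_add_of_nonneg_right (by positivity)) (h2 n), h3⟩
  obtain ⟨K, hK, hKm, hKl, hKt, hKs⟩ := exists_weights a hpos hs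
  obtain ⟨κ, hκ, hκ1, hκup, hκdn, hκsum⟩ := exists_kernel K hK hKm hKl
  have hκS : ∀ k, Summable (κ k) := fun k =>
    summable_of_sum_range_le (fun n => (hκ k n).le) (hκsum k)
  have hκT : ∀ k, ∑' n, κ k n ≤ 1 + 3 * K k := fun k =>
    Real.tsum_le_of_sum_range_le (fun n => (hκ k n).le) (hκsum k)
  have hF : Summable fun p : ℕ × ℕ => a p.1 * κ p.1 p.2 := by
    have h0 : 0 ≤ fun p : ℕ × ℕ => a p.1 * κ p.1 p.2 := fun p =>
      mul_nonneg (ha p.1) (hκ p.1 p.2).le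
    rw [summable_prod_of_nonneg h0]
    refine ⟨fun k => (hκS k).mul_left (a k), ?_⟩
    simp only [tsum_mul_left]
    refine Summable.of_nonneg_of_le (fun k => mul_nonneg (ha _) (tsum_nonneg fun n => (hκ _ _).le))
      (fun k => mul_le_mul_of_nonneg_left (hκT k) (ha k)) ?_
    simpa only [mul_add, mul_one, mul_left_comm] using hs.add (hKs.mul_left 3)
  have hcol : ∀ n, Summable fun k => a k * κ k n := fun n => hF.prod_symm.prod_factor n
  have hle : ∀ n, a n ≤ ∑' k, a k * κ k n := fun n => by
    simpa [hκ1] using (hcol n).le_tsum n fun k _ => mul_nonneg (ha k) (hκ k n).le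
  have hbpos := fun n => (hpos n).trans_le (hle n)
  refine ⟨fun n => ∑' k, a k * κ k n, hbpos, hle, hF.prod_symm.prod, ?_⟩
  have hKi : Tendsto (fun n => 1 + (K n)⁻¹) atTop (nhds 1) := by
    simpa using hKt.inv_tendsto_atTop.const_add 1
  have hKi' : Tendsto (fun n => (1 + (K n)⁻¹)⁻¹) atTop (nhds 1) := by
    simpa using hKi.inv₀ one_ne_zero
  refine tendsto_of_tendsto_of_tendsto_of_le_of_le hKi' hKi (fun n => ?_) (fun n => ?_)
  · have h := hK n
    simp only
    rw [le_div_iff₀ (hbpos n), inv_mul_le_iff₀ (by positivity), ← tsum_mul_left]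
    refine (hcol n).tsum_le_tsum (fun k => ?_) ((hcol (n + 1)).mul_left _)
    calc _ ≤ a k * ((1 + (K n)⁻¹) * κ k (n + 1)) := mul_le_mul_of_nonneg_left (hκdn k n) (ha k)
      _ = _ := by ring
  · simp only
    rw [div_le_iff₀ (hbpos n), ← tsum_mul_left]
    refine (hcol (n + 1)).tsum_le_tsum (fun k => ?_) ((hcol n).mul_left _)
    calc _ ≤ a k * ((1 + (K n)⁻¹) * κ k n) := mul_le_mul_of_nonneg_left (hκup k n) (ha k)
      _ = _ := by ring

/-! ### Shift ratios in logarithmic scale -/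

lemma tendsto_shift_ratio (b : ℕ → ℝ) (hb : ∀ n, 0 < b n)
    (h : Tendsto (fun n => b (n + 1) / b n) atTop (nhds 1)) (m : ℕ) :
    Tendsto (fun n => b (n + m) / b n) atTop (nhds 1) := by
  induction m with
  | zero => simp [fun n => div_self (hb n).ne']
  | succ m ih =>
    have h2 := (h.comp (tendsto_add_atTop_nat m)).mul ih
    rw [mul_one] at h2
    refine h2.congr fun n => ?_
    have := (hb (n + m)).ne'
    simp only [Function.comp, ← add_assoc]
    field_simp

/-- The step function `s ↦ b ⌊s - 1⌋₊` inherits the asymptotic shift invariance of `b`: for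
`c ≥ 0` the index moves by either `⌊c⌋₊` or `⌊c⌋₊ + 1`. -/
lemma tendsto_floor_ratio (b : ℕ → ℝ) (hb : ∀ n, 0 < b n)
    (h : Tendsto (fun n => b (n + 1) / b n) atTop (nhds 1)) (c : ℝ) :
    Tendsto (fun s : ℝ => b ⌊s + c - 1⌋₊ / b ⌊s - 1⌋₊) atTop (nhds 1) := by
  wlog hc : 0 ≤ c generalizing c
  · have h1 := ((this (-c) (by linarith)).comp
      (tendsto_atTop_add_const_right atTop c tendsto_id)).inv₀ one_ne_zero
    rw [inv_one] at h1
    refine h1.congr fun s => ?_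
    simp
  have hfl : Tendsto (fun s : ℝ => ⌊s - 1⌋₊) atTop atTop :=
    tendsto_nat_floor_atTop.comp (tendsto_atTop_add_const_right atTop (-1) tendsto_id)
  have h1 := (tendsto_shift_ratio b hb h ⌊c⌋₊).comp hfl
  have h2 := (tendsto_shift_ratio b hb h (⌊c⌋₊ + 1)).comp hfl
  rw [Metric.tendsto_nhds] at h1 h2 ⊢
  intro ε hε
  filter_upwards [h1 ε hε, h2 ε hε, eventually_ge_atTop 1] with s hs1 hs2 hs
  have hx := Nat.floor_le (sub_nonneg.2 hs)
  have hx' := Nat.lt_floor_add_one (s - 1)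
  have hy := Nat.floor_le hc
  have hy' := Nat.lt_floor_add_one c
  have hz := Nat.floor_le (show 0 ≤ s + c - 1 by linarith)
  have hz' := Nat.lt_floor_add_one (s + c - 1)
  have hlo : ⌊s - 1⌋₊ + ⌊c⌋₊ < ⌊s + c - 1⌋₊ + 1 := by
    exact_mod_cast (by push_cast; linarith :
      ((⌊s - 1⌋₊ + ⌊c⌋₊ : ℕ) : ℝ) < ((⌊s + c - 1⌋₊ + 1 : ℕ) : ℝ))
  have hhi : ⌊s + c - 1⌋₊ < ⌊s - 1⌋₊ + ⌊c⌋₊ + 2 := by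
    exact_mod_cast (by push_cast; linarith :
      ((⌊s + c - 1⌋₊ : ℕ) : ℝ) < ((⌊s - 1⌋₊ + ⌊c⌋₊ + 2 : ℕ) : ℝ))
  obtain he | he : ⌊s + c - 1⌋₊ = ⌊s - 1⌋₊ + ⌊c⌋₊ ∨
      ⌊s + c - 1⌋₊ = ⌊s - 1⌋₊ + (⌊c⌋₊ + 1) := by omega
  · rw [he]; exact hs1
  · rw [he]; exact hs2

/-- An asymptotic shift ratio passes from a positive density to its tail integral. -/
lemma tendsto_tail_integral_ratio (g : ℝ → ℝ) (hg : ∀ s, 0 < g s) (S c q : ℝ)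
    (hint : IntegrableOn g (Ioi S))
    (h : Tendsto (fun s => g (s + c) / g s) atTop (nhds q)) :
    Tendsto (fun s => (∫ r in Ioi (s + c), g r) / ∫ r in Ioi s, g r) atTop (nhds q) := by
  rw [Metric.tendsto_atTop] at h
  rw [Metric.tendsto_nhds]
  intro ε hε
  obtain ⟨s₀, hs₀⟩ := h (ε / 2) (half_pos hε)
  filter_upwards [eventually_ge_atTop s₀, eventually_ge_atTop S,
    eventually_ge_atTop (S - c)] with s h1 h2 h3
  have hpre : (fun x => x + c) ⁻¹' Ioi (s + c) = Ioi s := by ext x; simp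
  have hmp := measurePreserving_add_right (volume : Measure ℝ) c
  have hshift : ∫ r in Ioi (s + c), g r = ∫ r in Ioi s, g (r + c) := by
    rw [← hmp.setIntegral_preimage_emb (measurableEmbedding_addRight c), hpre]
  have hi1 : IntegrableOn g (Ioi s) := hint.mono_set (Ioi_subset_Ioi h2)
  have hi2 : IntegrableOn (fun r => g (r + c)) (Ioi s) := by
    have := (hmp.integrableOn_comp_preimage (measurableEmbedding_addRight c)
      (f := g) (s := Ioi (s + c))).2 (hint.mono_set (Ioi_subset_Ioi (by linarith)))
    rwa [hpre] at this
  have hpos : 0 < ∫ r in Ioi s, g r := by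
    rw [setIntegral_pos_iff_support_of_nonneg_ae (Eventually.of_forall fun r => (hg r).le) hi1]
    have : Function.support g = univ := by ext r; simp [(hg r).ne']
    simp [this]
  have hpt : ∀ r ∈ Ioi s, ‖g (r + c) - q * g r‖ ≤ ε / 2 * g r := by
    intro r hr
    have := (hs₀ r (h1.trans (le_of_lt hr))).le
    rw [Real.dist_eq, div_sub' (hg r).ne', abs_div, abs_of_pos (hg r), div_le_iff₀ (hg r)] at this
    rwa [Real.norm_eq_abs, mul_comm q]
  have hb : ‖∫ r in Ioi s, (g (r + c) - q * g r)‖ ≤ ∫ r in Ioi s, ε / 2 * g r :=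
    norm_integral_le_of_norm_le (hi1.const_mul _)
      ((ae_restrict_iff' measurableSet_Ioi).2 (Eventually.of_forall hpt))
  rw [integral_sub hi2 (hi1.const_mul _), integral_const_mul, integral_const_mul, ← hshift,
    Real.norm_eq_abs] at hb
  rw [Real.dist_eq, div_sub' hpos.ne', abs_div, abs_of_pos hpos, div_lt_iff₀ hpos, mul_comm _ q]
  nlinarith

/-! ### Summability of the tail and integrability of the density -/

/-- The geometric-scale form of the moment condition: pointwise, the sum of the `r ^ n` over those
`n` with `r ^ n < Z` is at most `r / (r - 1) * Z`. -/
lemma summable_geometric_tail {Ω : Type*} [MeasurableSpace Ω] {μ : Measure Ω}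
    [IsProbabilityMeasure μ] (Z : Ω → ℝ) (hZm : Measurable Z) (hZ : ∀ ω, 0 ≤ Z ω)
    (hint : Integrable Z μ) (r : ℝ) (hr : 1 < r) :
    Summable fun n : ℕ => r ^ n * μ.real {ω | r ^ n < Z ω} := by
  have hr0 : 0 < r := by linarith
  have hms : ∀ n : ℕ, MeasurableSet {ω | r ^ n < Z ω} :=
    fun n => measurableSet_lt measurable_const hZm
  have hpt : ∀ ω, ∀ N : ℕ, ∑ n ∈ Finset.range N,
      {ω | r ^ n < Z ω}.indicator (fun _ => r ^ n) ω ≤ r / (r - 1) * Z ω := by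
    intro ω N
    have hq : 0 < r / (r - 1) := div_pos hr0 (by linarith)
    induction N with
    | zero => simpa using mul_nonneg hq.le (hZ ω)
    | succ N ih =>
      by_cases hN : r ^ N < Z ω
      · calc _ ≤ ∑ n ∈ Finset.range (N + 1), r ^ n :=
              Finset.sum_le_sum fun n _ =>
                indicator_le_self' (fun _ _ => by positivity) ω
          _ = (r ^ (N + 1) - 1) / (r - 1) := geom_sum_eq hr.ne' _
          _ ≤ r / (r - 1) * r ^ N := by
            rw [div_mul_eq_mul_div]
            exact div_le_div_of_nonneg_right (by rw [pow_succ]; linarith) (by linarith)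
          _ ≤ _ := mul_le_mul_of_nonneg_left hN.le hq.le
      · rw [Finset.sum_range_succ, indicator_of_notMem (by simpa using hN), add_zero]
        exact ih
  have hind : ∀ n : ℕ, Integrable ({ω | r ^ n < Z ω}.indicator fun _ => r ^ n) μ :=
    fun n => (integrable_const _).indicator (hms n)
  refine summable_of_sum_range_le (c := ∫ ω, r / (r - 1) * Z ω ∂μ)
    (fun n => by positivity) fun N => ?_
  calc _ = ∑ n ∈ Finset.range N, ∫ ω, {ω | r ^ n < Z ω}.indicator (fun _ => r ^ n) ω ∂μ := by
        refine Finset.sum_congr rfl fun n _ => ?_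
        rw [integral_indicator_const _ (hms n), smul_eq_mul, mul_comm]
    _ = ∫ ω, ∑ n ∈ Finset.range N, {ω | r ^ n < Z ω}.indicator (fun _ => r ^ n) ω ∂μ :=
        (integral_finsetSum _ fun n _ => hind n).symm
    _ ≤ _ := integral_mono (integrable_finsetSum _ fun n _ => hind n) (hint.const_mul _)
        fun ω => hpt ω N

lemma integrableOn_floor (b : ℕ → ℝ) (hb : ∀ n, 0 < b n) (hs : Summable b) :
    IntegrableOn (fun s : ℝ => b ⌊s - 1⌋₊) (Ioi 1) := by
  have hmeas : Measurable fun s : ℝ => b ⌊s - 1⌋₊ :=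
    (measurable_from_nat (f := b)).comp (Nat.measurable_floor.comp (measurable_id.sub_const 1))
  refine ⟨hmeas.aestronglyMeasurable, ?_⟩
  rw [hasFiniteIntegral_iff_ofReal (Eventually.of_forall fun s => (hb _).le)]
  let F : ℕ → ℝ → ENNReal := fun n =>
    (Ico ((n : ℝ) + 1) (n + 2)).indicator fun _ => ENNReal.ofReal (b n)
  have hF : ∀ n, Measurable (F n) := fun n => measurable_const.indicator measurableSet_Ico
  calc ∫⁻ s in Ioi (1 : ℝ), ENNReal.ofReal (b ⌊s - 1⌋₊)
      ≤ ∫⁻ s in Ioi (1 : ℝ), ∑' n, F n s := by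
        refine setLIntegral_mono (Measurable.tsum hF) fun s hs1 => ?_
        refine le_trans ?_ (ENNReal.le_tsum ⌊s - 1⌋₊)
        have h1 := Nat.floor_le (show 0 ≤ s - 1 by linarith [mem_Ioi.1 hs1])
        have h2 := Nat.lt_floor_add_one (s - 1)
        simp only [F]
        rw [indicator_of_mem]
        exact ⟨by linarith, by linarith⟩
    _ ≤ ∫⁻ s, ∑' n, F n s := setLIntegral_le_lintegral _ _
    _ = ∑' n, ENNReal.ofReal (b n) := by
        rw [lintegral_tsum fun n => (hF n).aemeasurable]
        refine tsum_congr fun n => ?_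
        simp only [F]
        rw [lintegral_indicator_const measurableSet_Ico, Real.volume_Ico]
        norm_num
    _ < ⊤ := hs.tsum_ofReal_lt_top

/-! ### Construction of the majorant -/

/-- **Proposition 4** (Corollary 1 in Denisov). If `ζ ≥ 0` and `E ζ^α < ∞` for some
`α > 0`, then there is a (nonnegative) random variable `ζ̂` — described by its
distribution `ν` on `ℝ` — with `E ζ̂^α < ∞`, whose tail `t ↦ P(ζ̂ > t)` is regularly
varying with exponent `-α`, and with `ζ ≤_st ζ̂`. -/
theorem exists_regularly_varying_majorant
    {Ω : Type*} [MeasurableSpace Ω] {μ : Measure Ω} [IsProbabilityMeasure μ]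
    (ζ : Ω → ℝ) (hmeas : Measurable ζ) (hnonneg : ∀ ω, 0 ≤ ζ ω)
    (α : ℝ) (hα : 0 < α)
    (hmom : Integrable (fun ω => ζ ω ^ α) μ) :
    ∃ ν : Measure ℝ, IsProbabilityMeasure ν ∧
      -- ζ̂ is nonnegative
      ν (Set.Iio 0) = 0 ∧
      -- E ζ̂^α < ∞
      Integrable (fun t => t ^ α) ν ∧
      -- the tail of ζ̂ is regularly varying with exponent -α
      (∀ l : ℝ, 0 < l →
        Tendsto (fun t => (ν (Set.Ioi (l * t))).toReal / (ν (Set.Ioi t)).toReal)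
          atTop (nhds (l ^ (-α)))) ∧
      -- ζ ≤_st ζ̂
      (∀ x : ℝ, μ {ω | x < ζ ω} ≤ ν (Set.Ioi x)) := by
  have hsum : Summable fun n : ℕ => Real.exp (α * (n + 2)) * μ.real {ω | Real.exp n < ζ ω} := by
    have h := summable_geometric_tail (μ := μ) (fun ω => ζ ω ^ α) (hmeas.pow_const α)
      (fun ω => Real.rpow_nonneg (hnonneg ω) α) hmom (Real.exp α) (Real.one_lt_exp_iff.2 hα)
    refine (h.mul_left (Real.exp (2 * α))).congr fun n => ?_
    have hset : {ω | Real.exp α ^ n < ζ ω ^ α} = {ω | Real.exp n < ζ ω} := by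
      ext ω
      rw [mem_ofPred_eq, mem_ofPred_eq, ← Real.exp_nat_mul, Real.exp_mul,
        Real.rpow_lt_rpow_iff (Real.exp_pos _).le (hnonneg ω) hα]
    rw [hset, ← Real.exp_nat_mul, ← mul_assoc, ← Real.exp_add]
    ring_nf
  obtain ⟨b, hb, hab, hbs, hbr⟩ := exists_slow_majorant _ (fun n => by positivity) hsum
  -- The density of `log ζ̂`. The offset `- 1` makes `b n` govern the interval `[n + 1, n + 2)`,
  -- all of which contributes to the tail beyond any `s < n + 1`.
  let g : ℝ → ℝ := fun s => b ⌊s - 1⌋₊ * Real.exp (-α * s)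
  have hg : ∀ s, 0 < g s := fun s => mul_pos (hb _) (Real.exp_pos _)
  have hgm : Measurable g :=
    ((measurable_from_nat (f := b)).comp
      (Nat.measurable_floor.comp (measurable_id.sub_const 1))).mul (by fun_prop)
  have hbi := integrableOn_floor b hb hbs
  have hgle : ∀ T, ∀ s ∈ Ioi T, g s ≤ Real.exp (-α * T) * b ⌊s - 1⌋₊ := by
    intro T s hs
    rw [mul_comm]
    refine mul_le_mul_of_nonneg_left (Real.exp_le_exp.2 ?_) (hb _).le
    nlinarith [mem_Ioi.1 hs]
  have hgi : IntegrableOn g (Ioi 1) := by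
    refine Integrable.mono' (hbi.const_mul (Real.exp (-α * 1))) hgm.aestronglyMeasurable ?_
    refine (ae_restrict_iff' measurableSet_Ioi).2 (Eventually.of_forall fun s hs => ?_)
    rw [Real.norm_eq_abs, abs_of_pos (hg s)]
    exact hgle 1 s hs
  -- Beyond a large `S` the density has mass at most one; an atom at `exp S` supplies the rest.
  obtain ⟨S, hS1, hSm⟩ : ∃ S : ℝ, 1 ≤ S ∧ ∫ s in Ioi S, g s ≤ 1 := by
    have ht : Tendsto (fun S : ℝ => Real.exp (-α * S) * ∫ s in Ioi (1 : ℝ), b ⌊s - 1⌋₊)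
        atTop (nhds 0) := by
      simpa using (Real.tendsto_exp_atBot.comp
        (tendsto_id.const_mul_atTop_of_neg (neg_lt_zero.2 hα))).mul_const
          (∫ s in Ioi (1 : ℝ), b ⌊s - 1⌋₊)
    obtain ⟨S, h1, h2⟩ := ((eventually_ge_atTop 1).and
      (ht.eventually (gt_mem_nhds one_pos))).exists
    refine ⟨S, h1, le_trans ?_ h2.le⟩
    have hsub : Ioi S ⊆ Ioi 1 := Ioi_subset_Ioi h1
    calc ∫ s in Ioi S, g s ≤ ∫ s : ℝ in Ioi S, Real.exp (-α * S) * b ⌊s - 1⌋₊ :=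
          setIntegral_mono_on (hgi.mono_set hsub) ((hbi.mono_set hsub).const_mul _)
            measurableSet_Ioi (hgle S)
      _ = Real.exp (-α * S) * ∫ s : ℝ in Ioi S, b ⌊s - 1⌋₊ := integral_const_mul _ _
      _ ≤ _ := mul_le_mul_of_nonneg_left
          (setIntegral_mono_set hbi (Eventually.of_forall fun s => (hb _).le)
            hsub.eventuallyLE) (Real.exp_pos _).le
  have hgiS : IntegrableOn g (Ioi S) := hgi.mono_set (Ioi_subset_Ioi hS1)
  let ρ : Measure ℝ := (volume.restrict (Ioi S)).withDensity fun s => ENNReal.ofReal (g s)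
  have hρ : ∀ s, S ≤ s → ρ (Ioi s) = ENNReal.ofReal (∫ r in Ioi s, g r) := by
    intro s hs
    rw [withDensity_apply _ measurableSet_Ioi, Measure.restrict_restrict measurableSet_Ioi,
      inter_eq_left.2 (Ioi_subset_Ioi hs),
      ofReal_integral_eq_lintegral_ofReal (hgiS.mono_set (Ioi_subset_Ioi hs))
        (Eventually.of_forall fun r => (hg r).le)]
  have hρac : ρ ≪ volume.restrict (Ioi S) := withDensity_absolutelyContinuous _ _
  have hρIic : ρ (Iic S) = 0 := hρac (by
    rw [Measure.restrict_apply measurableSet_Iic, Iic_inter_Ioi, Ioc_self, measure_empty])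
  have hρ1 : ρ univ ≤ 1 := by
    rw [← Iic_union_Ioi (a := S)]
    refine (measure_union_le _ _).trans ?_
    rw [hρIic, zero_add, hρ S le_rfl]
    exact ENNReal.ofReal_le_one.2 hSm
  let ν : Measure ℝ := ρ.map Real.exp + (1 - ρ univ) • Measure.dirac (Real.exp S)
  have hνp : IsProbabilityMeasure ν := ⟨by
    simp only [ν, Measure.add_apply, Measure.smul_apply, smul_eq_mul, measure_univ, mul_one]
    rw [Measure.map_apply Real.measurable_exp MeasurableSet.univ, preimage_univ]
    exact add_tsub_cancel_of_le hρ1⟩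
  have hνlow : ∀ x < Real.exp S, ν (Iic x) = 0 := by
    intro x hx
    have h1 : ρ (Real.exp ⁻¹' Iic x) = 0 :=
      measure_mono_null (fun s hs => Real.exp_le_exp.1 (le_trans hs hx.le)) hρIic
    simp only [ν, Measure.add_apply, Measure.smul_apply, smul_eq_mul]
    rw [Measure.map_apply Real.measurable_exp measurableSet_Iic, h1,
      Measure.dirac_apply' _ measurableSet_Iic, indicator_of_notMem (by simpa using hx)]
    simp
  have hνhigh : ∀ s, S ≤ s → ν (Ioi (Real.exp s)) = ENNReal.ofReal (∫ r in Ioi s, g r) := by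
    intro s hs
    have hpre : Real.exp ⁻¹' Ioi (Real.exp s) = Ioi s := by ext r; simp
    simp only [ν, Measure.add_apply, Measure.smul_apply, smul_eq_mul]
    rw [Measure.map_apply Real.measurable_exp measurableSet_Ioi, hpre, hρ s hs,
      Measure.dirac_apply' _ measurableSet_Ioi, indicator_of_notMem (by simpa using hs)]
    simp
  refine ⟨ν, hνp, ?_, ?_, ?_, ?_⟩
  · exact measure_mono_null Iio_subset_Iic_self (hνlow 0 (Real.exp_pos S))
  · refine Integrable.add_measure ?_ ?_
    · rw [integrable_map_measure (by fun_prop) Real.measurable_exp.aemeasurable,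
        integrable_withDensity_iff_integrable_smul' hgm.ennreal_ofReal
          (Eventually.of_forall fun s => ENNReal.ofReal_lt_top)]
      refine (hbi.mono_set (Ioi_subset_Ioi hS1)).congr (Eventually.of_forall fun s => ?_)
      simp only [Function.comp, smul_eq_mul, ENNReal.toReal_ofReal (hg s).le, g]
      rw [← Real.exp_mul, mul_assoc, ← Real.exp_add]
      ring_nf
      simp
    · exact (integrable_dirac (by simp)).smul_measure (ENNReal.sub_ne_top ENNReal.one_ne_top)
  · intro l hl
    have hratio : Tendsto (fun s => g (s + Real.log l) / g s) atTop (nhds (l ^ (-α))) := by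
      have h := (tendsto_floor_ratio b hb hbr (Real.log l)).mul_const (l ^ (-α))
      rw [one_mul] at h
      refine h.congr fun s => ?_
      simp only [g]
      rw [mul_div_mul_comm, ← Real.exp_sub, Real.rpow_def_of_pos hl]
      ring_nf
    have h := (tendsto_tail_integral_ratio g hg S _ _ hgiS hratio).comp Real.tendsto_log_atTop
    refine h.congr' ?_
    filter_upwards [eventually_gt_atTop 0, Real.tendsto_log_atTop.eventually_ge_atTop S,
      Real.tendsto_log_atTop.eventually_ge_atTop (S - Real.log l)] with t ht h1 h2
    have hnn : ∀ s, 0 ≤ ∫ r in Ioi s, g r := fun s => integral_nonneg fun r => (hg r).le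
    have e1 := hνhigh (Real.log t) h1
    have e2 := hνhigh (Real.log t + Real.log l) (by linarith)
    rw [Real.exp_log ht] at e1
    rw [Real.exp_add, Real.exp_log ht, Real.exp_log hl, mul_comm] at e2
    rw [e1, e2, ENNReal.toReal_ofReal (hnn _), ENNReal.toReal_ofReal (hnn _)]
    rfl
  · intro x
    rcases lt_or_ge x (Real.exp S) with hx | hx
    · have : ν (Ioi x) = 1 := by
        rw [← compl_Iic, prob_compl_eq_one_iff measurableSet_Iic]
        exact hνlow x hx
      rw [this]
      exact prob_le_one
    · have hx0 : 0 < x := (Real.exp_pos S).trans_le hx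
      have hsx : S ≤ Real.log x := (Real.le_log_iff_exp_le hx0).2 hx
      have hν := hνhigh _ hsx
      rw [Real.exp_log hx0] at hν
      rw [hν]
      set s := Real.log x with hs
      set n := ⌊s⌋₊ with hn
      have h1 : (n : ℝ) ≤ s := Nat.floor_le (by linarith)
      have h2 : s < n + 1 := Nat.lt_floor_add_one s
      have hsub : Ico ((n : ℝ) + 1) (n + 2) ⊆ Ioi s := fun r hr => lt_of_lt_of_le h2 hr.1
      have hgs := hgiS.mono_set (Ioi_subset_Ioi hsx)
      have hlow : b n * Real.exp (-α * (n + 2)) ≤ ∫ r in Ioi s, g r := by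
        have hge := setIntegral_ge_of_const_le_real (μ := volume)
          (c := b n * Real.exp (-α * (n + 2))) (f := g)
          (s := Ico ((n : ℝ) + 1) (n + 2)) measurableSet_Ico (by simp) ?_ (hgs.mono_set hsub)
        · refine le_trans ?_ (hge.trans (setIntegral_mono_set hgs
            (Eventually.of_forall fun r => (hg r).le) hsub.eventuallyLE))
          rw [Real.volume_real_Ico_of_le (by linarith)]
          apply le_of_eq; ring
        · intro r hr
          have hfl : ⌊r - 1⌋₊ = n :=
            (Nat.floor_eq_iff (by linarith [hr.1, (Nat.cast_nonneg n : (0 : ℝ) ≤ n)])).2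
              ⟨by linarith [hr.1], by linarith [hr.2]⟩
          simp only [g, hfl]
          exact mul_le_mul_of_nonneg_left (Real.exp_le_exp.2 (by nlinarith [hr.2])) (hb n).le
      have hmain : μ.real {ω | Real.exp n < ζ ω} ≤ b n * Real.exp (-α * (n + 2)) := by
        have := hab n
        rw [neg_mul, Real.exp_neg, ← div_eq_mul_inv, le_div_iff₀ (Real.exp_pos _), mul_comm]
        exact this
      calc μ {ω | x < ζ ω} ≤ μ {ω | Real.exp n < ζ ω} :=
            measure_mono fun ω hω =>
              lt_of_le_of_lt ((Real.le_log_iff_exp_le hx0).1 h1) hω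
        _ = ENNReal.ofReal (μ.real {ω | Real.exp n < ζ ω}) := (ofReal_measureReal).symm
        _ ≤ _ := ENNReal.ofReal_le_ofReal (hmain.trans hlow)
end

section
/- Strong subexponentiality is a tail property: if F is a strong subexponential distribution function and G is a distribution function with finite mean on the positive half-line such that Ḡ(x) ∼ F̄(x) as x → ∞, then G is also strong subexponential. -/
/-! Write `K_x(y) = Ḡ(x-y)/Ḡ(x) - 1`, which is nonnegative for `y ≥ 0` because `Ḡ` is antitone.
By the symmetry `y ↦ x - y`, membership in `𝒮*` says `∫₀^{x/2} F̄(x-y) F̄(y) dy ∼ m F̄(x)`. On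
`[0, x/2]` the argument `x - y` is at least `x/2`, so `Ḡ(x-y) ≤ (1+ε) F̄(x-y)` there for large `x`;
hence `D(x) = ∫₀^{x/2} K_x(y) F̄(y) dy → 0` (`tendsto_excess`).

Restricting `D(x)` to `[t, t+1]` gives `Ḡ(x-t)/Ḡ(x) → 1`, i.e. `G` is long-tailed
(`tendsto_longTail`). Choose `A ≥ 0` with `Ḡ ≤ 2 F̄` on `[A, ∞)`. Then on `[0, x/2]`, pointwise,
`K_x(y) Ḡ(y) ≤ K_x(A) Ḡ(y) + 2 K_x(y) F̄(y)`, and integrating shows `∫₀^{x/2} K_x Ḡ → 0`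
(`tendsto_excess_self`), which is the strong subexponentiality of `G` after unfolding the symmetry
again. The function `F̄` need not be monotone: only the monotonicity of `Ḡ` is used. -/

open MeasureTheory Filter Set

/-- The convolution integral over `[0, x]` is twice the one over `[0, x/2]`. -/
lemma conv_eq_two_half (h : ℝ → ℝ) (x : ℝ) (hx : 0 ≤ x)
    (hi : IntervalIntegrable (fun y => h (x - y) * h y) volume 0 x) :
    ∫ y in (0:ℝ)..x, h (x - y) * h y = 2 * ∫ y in (0:ℝ)..(x / 2), h (x - y) * h y := by
  have h1 : IntervalIntegrable (fun y => h (x - y) * h y) volume 0 (x / 2) :=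
    hi.mono_set <| by
      rw [uIcc_of_le (by linarith), uIcc_of_le hx]
      exact Icc_subset_Icc_right (by linarith)
  have h2 : IntervalIntegrable (fun y => h (x - y) * h y) volume (x / 2) x :=
    hi.mono_set <| by
      rw [uIcc_of_le (by linarith), uIcc_of_le hx]
      exact Icc_subset_Icc_left (by linarith)
  rw [← intervalIntegral.integral_add_adjacent_intervals h1 h2, two_mul]
  congr 1
  have := intervalIntegral.integral_comp_sub_left (a := 0) (b := x / 2)
    (fun y => h (x - y) * h y) x
  rw [sub_zero, show x - x / 2 = x / 2 by ring] at this
  rw [← this]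
  congr 1
  ext y
  rw [sub_sub_cancel, mul_comm]

lemma intervalIntegrable_shift_mul {G f : ℝ → ℝ} (hG : Antitone G) (h1 : ∀ x, G x ≤ 1)
    (h0 : ∀ x, 0 ≤ G x) (hf : IntegrableOn f (Ioi 0)) (x a b : ℝ) (ha : 0 ≤ a) (hab : a ≤ b) :
    IntervalIntegrable (fun y => G (x - y) * f y) volume a b := by
  rw [intervalIntegrable_iff_integrableOn_Ioc_of_le hab]
  refine Integrable.bdd_mul (c := 1) (hf.mono_set fun y hy => lt_of_le_of_lt ha hy.1) ?_ ?_
  · exact (hG.measurable.comp (measurable_const.sub measurable_id)).aestronglyMeasurable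
  · exact Eventually.of_forall fun y => by rw [Real.norm_of_nonneg (h0 _)]; exact h1 _

lemma intervalIntegrable_of_Ioi {f : ℝ → ℝ} (hf : IntegrableOn f (Ioi 0)) (a b : ℝ)
    (ha : 0 ≤ a) (hab : a ≤ b) : IntervalIntegrable f volume a b := by
  rw [intervalIntegrable_iff_integrableOn_Ioc_of_le hab]
  exact hf.mono_set fun y hy => lt_of_le_of_lt ha hy.1

/-- The excess integrand `(G (x - y) / G x - 1) * f y` is integrable on `[a, b]`. -/
lemma intervalIntegrable_excess {G f : ℝ → ℝ} (hG : Antitone G) (h1 : ∀ x, G x ≤ 1)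
    (h0 : ∀ x, 0 ≤ G x) (hf : IntegrableOn f (Ioi 0)) (x a b : ℝ) (ha : 0 ≤ a) (hab : a ≤ b) :
    IntervalIntegrable (fun y => (G (x - y) / G x - 1) * f y) volume a b := by
  have := ((intervalIntegrable_shift_mul hG h1 h0 hf x a b ha hab).const_mul (G x)⁻¹).sub
    (intervalIntegrable_of_Ioi hf a b ha hab)
  refine this.congr fun y _ => ?_
  ring

/-- The excess integral splits into the normalised convolution minus the truncated mean. -/
lemma integral_excess {G f : ℝ → ℝ} (hG : Antitone G) (h1 : ∀ x, G x ≤ 1)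
    (h0 : ∀ x, 0 ≤ G x) (hf : IntegrableOn f (Ioi 0)) (x : ℝ) (hx : 0 ≤ x) :
    ∫ y in (0:ℝ)..(x / 2), (G (x - y) / G x - 1) * f y =
      (∫ y in (0:ℝ)..(x / 2), G (x - y) * f y) / G x - ∫ y in (0:ℝ)..(x / 2), f y := by
  rw [div_eq_inv_mul (∫ y in (0:ℝ)..(x / 2), G (x - y) * f y),
    ← intervalIntegral.integral_const_mul, ← intervalIntegral.integral_sub
    ((intervalIntegrable_shift_mul hG h1 h0 hf x 0 (x / 2) le_rfl (by linarith)).const_mul _)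
    (intervalIntegrable_of_Ioi hf 0 (x / 2) le_rfl (by linarith))]
  congr 1
  ext y
  ring

lemma excess_nonneg {G : ℝ → ℝ} (hG : Antitone G) (hpos : ∀ x, 0 < G x) (x y : ℝ) (hy : 0 ≤ y) :
    0 ≤ G (x - y) / G x - 1 := by
  rw [sub_nonneg, one_le_div (hpos x)]
  exact hG (by linarith)

lemma tendsto_half_integral {f : ℝ → ℝ} (hf : IntegrableOn f (Ioi 0)) :
    Tendsto (fun x : ℝ => ∫ y in (0:ℝ)..(x / 2), f y) atTop (nhds (∫ y in Ioi (0:ℝ), f y)) :=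
  intervalIntegral_tendsto_integral_Ioi 0 hf (tendsto_id.atTop_div_const two_pos)

lemma integral_Ioi_pos {f : ℝ → ℝ} (hpos : ∀ x, 0 < f x) (hf : IntegrableOn f (Ioi 0)) :
    0 < ∫ y in Ioi (0:ℝ), f y := by
  rw [setIntegral_pos_iff_support_of_nonneg_ae (Eventually.of_forall fun y => (hpos y).le) hf]
  have : Function.support f = univ := by ext y; simp [(hpos y).ne']
  simp [this]

/-- The half-range convolution of a strong subexponential tail is asymptotic to `m F̄(x)`. -/
lemma IsStrongSubexp.tendsto_half {F : ℝ → ℝ} (hF : IsStrongSubexp F) :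
    (∀ᶠ x in atTop, IntervalIntegrable (fun y => F (x - y) * F y) volume 0 x) ∧
    Tendsto (fun x => (∫ y in (0:ℝ)..(x / 2), F (x - y) * F y) / F x) atTop
      (nhds (∫ y in Ioi (0:ℝ), F y)) := by
  obtain ⟨hpos, hint, hlim⟩ := hF
  have hm := integral_Ioi_pos hpos hint
  -- The limit being nonzero rules out the junk value of a divergent integral.
  have hi : ∀ᶠ x in atTop, IntervalIntegrable (fun y => F (x - y) * F y) volume 0 x := by
    filter_upwards [hlim.eventually_ne one_ne_zero] with x hx
    by_contra hn
    exact hx (by rw [intervalIntegral.integral_undef hn, zero_div])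
  refine ⟨hi, ?_⟩
  have := hlim.mul_const (∫ y in Ioi (0:ℝ), F y)
  rw [one_mul] at this
  refine this.congr' ?_
  filter_upwards [hi, eventually_ge_atTop 0] with x hx hx0
  rw [conv_eq_two_half F x hx0 hx]
  have := (hpos x).ne'
  field_simp

/-- `∫₀^{x/2} (Ḡ(x-y)/Ḡ(x) - 1) F̄(y) dy → 0`. -/
lemma tendsto_excess {F G : ℝ → ℝ} (hF : IsStrongSubexp F) (hG : Antitone G)
    (h1 : ∀ x, G x ≤ 1) (hpos : ∀ x, 0 < G x)
    (hGF : Tendsto (fun x => G x / F x) atTop (nhds 1)) :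
    Tendsto (fun x => ∫ y in (0:ℝ)..(x / 2), (G (x - y) / G x - 1) * F y) atTop (nhds 0) := by
  have h0 : ∀ x, 0 ≤ G x := fun x => (hpos x).le
  obtain ⟨hi, hlim⟩ := hF.tendsto_half
  obtain ⟨hFpos, hint, -⟩ := hF
  have hm := integral_Ioi_pos hFpos hint
  set m := ∫ y in Ioi (0:ℝ), F y with hmdef
  have hlimG : Tendsto (fun x => (∫ y in (0:ℝ)..(x / 2), F (x - y) * F y) / G x) atTop
      (nhds m) := by
    have := hlim.div hGF one_ne_zero
    rw [div_one] at this
    refine this.congr fun x => ?_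
    simp only [Pi.div_apply]
    have := (hpos x).ne'
    have := (hFpos x).ne'
    field_simp
  refine tendsto_order.2 ⟨fun a ha => ?_, fun δ hδ => ?_⟩
  · filter_upwards [eventually_ge_atTop 0] with x hx
    refine ha.trans_le (intervalIntegral.integral_nonneg (by linarith) fun y hy => ?_)
    exact mul_nonneg (excess_nonneg hG hpos x y hy.1) (hFpos y).le
  · obtain ⟨ε, hε, hεm⟩ : ∃ ε : ℝ, 0 < ε ∧ ε * m < δ :=
      ⟨δ / (2 * m), by positivity, by field_simp; linarith⟩
    have hlt : ∀ᶠ x in atTop, G x ≤ (1 + ε) * F x := by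
      filter_upwards [hGF.eventually_lt_const (show (1:ℝ) < 1 + ε by linarith)] with x hx
      exact ((div_lt_iff₀ (hFpos x)).1 hx).le
    obtain ⟨X, hX⟩ := eventually_atTop.1 hlt
    have hup := (hlimG.const_mul (1 + ε)).sub (tendsto_half_integral hint)
    have hup' := hup.eventually_lt_const (show (1 + ε) * m - m < δ by linarith)
    filter_upwards [hup', hi, eventually_ge_atTop 0, eventually_ge_atTop (2 * X)]
      with x hx hix hx0 hxX
    rw [integral_excess hG h1 h0 hint x hx0]
    refine lt_of_le_of_lt (sub_le_sub_right ?_ _) hx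
    rw [← mul_div_assoc]
    refine div_le_div_of_nonneg_right ?_ (h0 x)
    rw [← intervalIntegral.integral_const_mul]
    refine intervalIntegral.integral_mono_on (by linarith)
      (intervalIntegrable_shift_mul hG h1 h0 hint x 0 (x / 2) le_rfl (by linarith))
      (IntervalIntegrable.const_mul (hix.mono_set ?_) _) fun y hy => ?_
    · rw [uIcc_of_le (by linarith), uIcc_of_le hx0]
      exact Icc_subset_Icc_right (by linarith)
    · rw [← mul_assoc]
      exact mul_le_mul_of_nonneg_right (hX _ (by linarith [hy.2])) (hFpos y).le

/-- A tail equivalent to a strong subexponential one is long-tailed. -/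
lemma tendsto_longTail {F G : ℝ → ℝ} (hF : IsStrongSubexp F) (hG : Antitone G)
    (h1 : ∀ x, G x ≤ 1) (hpos : ∀ x, 0 < G x)
    (hGF : Tendsto (fun x => G x / F x) atTop (nhds 1)) (t : ℝ) (ht : 0 ≤ t) :
    Tendsto (fun x => G (x - t) / G x - 1) atTop (nhds 0) := by
  have h0 : ∀ x, 0 ≤ G x := fun x => (hpos x).le
  have hD := tendsto_excess hF hG h1 hpos hGF
  obtain ⟨hFpos, hint, -⟩ := hF
  have hFi := intervalIntegrable_of_Ioi hint t (t + 1) ht (by linarith)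
  have hc : 0 < ∫ y in t..(t + 1), F y :=
    intervalIntegral.intervalIntegral_pos_of_pos hFi hFpos (by linarith)
  have hD' := hD.div_const (∫ y in t..(t + 1), F y)
  rw [zero_div] at hD'
  refine tendsto_of_tendsto_of_tendsto_of_le_of_le' tendsto_const_nhds hD'
    (Eventually.of_forall fun x => excess_nonneg hG hpos x t ht) ?_
  filter_upwards [eventually_ge_atTop (2 * (t + 1))] with x hx
  rw [le_div_iff₀ hc, ← intervalIntegral.integral_const_mul]
  calc ∫ y in t..(t + 1), (G (x - t) / G x - 1) * F y
      ≤ ∫ y in t..(t + 1), (G (x - y) / G x - 1) * F y := by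
        refine intervalIntegral.integral_mono_on (by linarith) (hFi.const_mul _)
          (intervalIntegrable_excess hG h1 h0 hint x _ _ ht (by linarith)) fun y hy => ?_
        refine mul_le_mul_of_nonneg_right (sub_le_sub_right
          (div_le_div_of_nonneg_right (hG ?_) (h0 x)) _) (hFpos y).le
        linarith [hy.1]
    _ ≤ ∫ y in (0:ℝ)..(x / 2), (G (x - y) / G x - 1) * F y := by
        refine intervalIntegral.integral_mono_interval ht (by linarith) (by linarith) ?_
          (intervalIntegrable_excess hG h1 h0 hint x _ _ le_rfl (by linarith))
        refine (ae_restrict_iff' measurableSet_Ioc).2 (Eventually.of_forall fun y hy => ?_)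
        exact mul_nonneg (excess_nonneg hG hpos x y hy.1.le) (hFpos y).le

/-- `∫₀^{x/2} (Ḡ(x-y)/Ḡ(x) - 1) Ḡ(y) dy → 0`. -/
lemma tendsto_excess_self {F G : ℝ → ℝ} (hF : IsStrongSubexp F) (hG : Antitone G)
    (h1 : ∀ x, G x ≤ 1) (hpos : ∀ x, 0 < G x) (hGint : IntegrableOn G (Ioi 0))
    (hGF : Tendsto (fun x => G x / F x) atTop (nhds 1)) :
    Tendsto (fun x => ∫ y in (0:ℝ)..(x / 2), (G (x - y) / G x - 1) * G y) atTop (nhds 0) := by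
  have h0 : ∀ x, 0 ≤ G x := fun x => (hpos x).le
  have hD := tendsto_excess hF hG h1 hpos hGF
  have hL := tendsto_longTail hF hG h1 hpos hGF
  obtain ⟨hFpos, hint, -⟩ := hF
  obtain ⟨A, hA0, hA⟩ : ∃ A : ℝ, 0 ≤ A ∧ ∀ y, A ≤ y → G y ≤ 2 * F y := by
    obtain ⟨X, hX⟩ := eventually_atTop.1 (hGF.eventually_lt_const one_lt_two)
    exact ⟨max X 0, le_max_right _ _, fun y hy =>
      ((div_lt_iff₀ (hFpos y)).1 (hX y ((le_max_left _ _).trans hy))).le⟩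
  have hup := ((hL A hA0).mul (tendsto_half_integral hGint)).add (hD.const_mul 2)
  rw [zero_mul, mul_zero, add_zero] at hup
  refine tendsto_of_tendsto_of_tendsto_of_le_of_le' tendsto_const_nhds hup ?_ ?_
  · filter_upwards [eventually_ge_atTop 0] with x hx
    refine intervalIntegral.integral_nonneg (by linarith) fun y hy => ?_
    exact mul_nonneg (excess_nonneg hG hpos x y hy.1) (h0 y)
  · filter_upwards [eventually_ge_atTop 0] with x hx
    have hx2 : 0 ≤ x / 2 := by linarith
    have i1 := (intervalIntegrable_of_Ioi hGint 0 (x / 2) le_rfl hx2).const_mul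
      (G (x - A) / G x - 1)
    have i2 := (intervalIntegrable_excess hG h1 h0 hint x 0 (x / 2) le_rfl hx2).const_mul 2
    rw [← intervalIntegral.integral_const_mul, ← intervalIntegral.integral_const_mul,
      ← intervalIntegral.integral_add i1 i2]
    refine intervalIntegral.integral_mono_on hx2
      (intervalIntegrable_excess hG h1 h0 hGint x 0 (x / 2) le_rfl hx2) (i1.add i2)
      fun y hy => ?_
    have hk := excess_nonneg hG hpos x y hy.1
    have hkA := excess_nonneg hG hpos x A hA0
    rcases le_total y A with hyA | hyA
    · have hle : G (x - y) / G x - 1 ≤ G (x - A) / G x - 1 :=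
        sub_le_sub_right (div_le_div_of_nonneg_right (hG (by linarith)) (h0 x)) _
      have := mul_le_mul_of_nonneg_right hle (h0 y)
      have := mul_nonneg hk (hFpos y).le
      linarith
    · have := mul_le_mul_of_nonneg_left (hA y hyA) hk
      have := mul_nonneg hkA (h0 y)
      linarith

/-- **Strong subexponentiality is a tail property** (Theorem 3.11 in
Foss–Korshunov–Zachary): if `F` is strong subexponential and `G` is a distribution
function with finite mean on the positive half-line whose tail satisfies
`Ḡ(x) ∼ F̄(x)` as `x → ∞`, then `G` is strong subexponential as well. -/
theorem strong_subexp_tail_property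
    (Fbar Gbar : ℝ → ℝ)
    (hF : IsStrongSubexp Fbar)
    -- Ḡ is the tail of a distribution function on ℝ
    (hG_anti : Antitone Gbar)
    (hG_le_one : ∀ x, Gbar x ≤ 1) (hG_nonneg : ∀ x, 0 ≤ Gbar x)
    (hG_bot : Tendsto Gbar atBot (nhds 1)) (hG_top : Tendsto Gbar atTop (nhds 0))
    -- finite mean on the positive half-line
    (hG_int : IntegrableOn Gbar (Set.Ioi 0))
    -- Ḡ(x) ∼ F̄(x) as x → ∞
    (hGF : Tendsto (fun x => Gbar x / Fbar x) atTop (nhds 1)) :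
    IsStrongSubexp Gbar := by
  have hpos : ∀ x, 0 < Gbar x := by
    intro x
    obtain ⟨z, hz, hxz⟩ :=
      ((hGF.eventually_ne one_ne_zero).and (eventually_ge_atTop x)).exists
    have hne : Gbar z ≠ 0 := fun h => hz (by rw [h, zero_div])
    exact ((hG_nonneg z).lt_of_ne' hne).trans_le (hG_anti hxz)
  refine ⟨hpos, hG_int, ?_⟩
  have hm := integral_Ioi_pos hpos hG_int
  have hE := ((tendsto_excess_self hF hG_anti hG_le_one hpos hG_int hGF).add
    (tendsto_half_integral hG_int)).div_const (∫ y in Ioi (0:ℝ), Gbar y)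
  rw [zero_add, div_self hm.ne'] at hE
  refine hE.congr' ?_
  filter_upwards [eventually_ge_atTop 0] with x hx
  rw [integral_excess hG_anti hG_le_one hG_nonneg hG_int x hx,
    conv_eq_two_half Gbar x hx
      (intervalIntegrable_shift_mul hG_anti hG_le_one hG_nonneg hG_int x 0 x le_rfl hx)]
  have := (hpos x).ne'
  field_simp
  ring
end
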